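/- Let ρ_0, ρ_1 : ℝ^d → [0,1] be measurable functions with compact support and equal positive integrals. Let ψ : ℝ^d → ℝ be convex and T : ℝ^d → ℝ^d a Borel map such that ψ is differentiable at Lebesgue-a.e. x with ∇ψ(x) = T(x), and T_#(ρ_0 dx) = ρ_1 dx; let μ_t = ((1−t)·id + t·T)_#(ρ_0 dx) for t ∈ [0,1]. Then there exist measurable functions ρ : ℝ^d × [0,1] → [0,1] and v : ℝ^d × [0,1] → ℝ^d such that ρ(·,t) dx = μ_t for every t ∈ [0,1], the total action satisfies ∫_0^1 ∫_{ℝ^d} ρ |v|² dx dt = d_W(ρ_0 dx, ρ_1 dx)² < ∞, and (ρ, v) is a weak solution of the pressureless Euler system on ℝ^d × (0,1): for every smooth test function q compactly supported in ℝ^d × (0,1), ∫_0^1 ∫_{ℝ^d} ρ (∂_t q + v·∇q) dx dt = 0, and for every smooth vector-valued test function ṽ compactly supported in ℝ^d × (0,1), ∫_0^1 ∫_{ℝ^d} ρ v·(∂_t ṽ + (v·∇)ṽ) dx dt = 0. -/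

import Mathlib

open Set MeasureTheory
open scoped ENNReal RealInnerProductSpace

/-- The squared quadratic Wasserstein cost between two measures on `ℝ^d`: the infimum
over couplings of the integral of `|x − y|²`. -/
noncomputable def W2sq {d : ℕ}
    (μ ν : Measure (EuclideanSpace ℝ (Fin d))) : ℝ≥0∞ :=
  sInf { C | ∃ π : Measure (EuclideanSpace ℝ (Fin d) × EuclideanSpace ℝ (Fin d)),
    π.map Prod.fst = μ ∧ π.map Prod.snd = ν ∧
    C = ∫⁻ q, ENNReal.ofReal (‖q.1 - q.2‖ ^ 2) ∂π }

section ConvexPart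

variable {E : Type*} [NormedAddCommGroup E] [InnerProductSpace ℝ E]

/-- A gradient of a convex function is a subgradient. -/
lemma subgradient_of_hasGradientAt [CompleteSpace E] {ψ : E → ℝ} (hψ : ConvexOn ℝ Set.univ ψ)
    {p x : E} (h : HasGradientAt ψ p x) (y : E) : ψ x + ⟪p, y - x⟫ ≤ ψ y := by
  have h1 : HasDerivAt (fun s : ℝ => ψ (x + s • (y - x))) ⟪p, y - x⟫ 0 := by
    have hl : HasDerivAt (fun s : ℝ => x + s • (y - x)) (y - x) 0 := by
      simpa using ((hasDerivAt_id (0:ℝ)).smul_const (y - x)).const_add x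
    have hf : HasFDerivAt ψ (InnerProductSpace.toDual ℝ E p) (x + (0:ℝ) • (y - x)) := by
      simpa using h.hasFDerivAt
    have := hf.comp_hasDerivAt (0:ℝ) hl
    simpa [Function.comp_def] using this
  have hc : ConvexOn ℝ Set.univ (fun s : ℝ => ψ (x + s • (y - x))) := by
    have := hψ.comp_affineMap (AffineMap.lineMap x y : ℝ →ᵃ[ℝ] E)
    have he : (fun s : ℝ => ψ (x + s • (y - x))) = ψ ∘ (AffineMap.lineMap x y : ℝ →ᵃ[ℝ] E) := by
      funext s
      simp [AffineMap.lineMap_apply, add_comm]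
    rw [he]
    exact this
  have := hc.le_slope_of_hasDerivAt (mem_univ 0) (mem_univ 1) zero_lt_one h1
  simp [slope] at this
  linarith

/-- Existence of the resolvent of the subdifferential of a convex function. -/
lemma exists_resolvent [FiniteDimensional ℝ E] {ψ : E → ℝ} (hψ : ConvexOn ℝ Set.univ ψ)
    {p x₀ : E} (h : ∀ y, ψ x₀ + ⟪p, y - x₀⟫ ≤ ψ y) :
    ∃ J : E → E, ∀ z y, ψ (J z) + ⟪z - J z, y - J z⟫ ≤ ψ y := by
  have hcont : Continuous ψ := by
    simpa [continuousOn_univ] using hψ.continuousOn isOpen_univ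
  have key : ∀ z, ∃ x, ∀ y, ψ x + ⟪z - x, y - x⟫ ≤ ψ y := by
    intro z
    let f : E → ℝ := fun y => ‖y‖ ^ 2 / 2 + ψ y - ⟪y, z⟫
    have hf : Continuous f := by fun_prop
    obtain ⟨x, hx⟩ : ∃ x, ∀ y, f x ≤ f y := by
      refine hf.exists_forall_le' 0 ?_
      have hC := norm_nonneg (p - z)
      set C := ‖p - z‖ with hCdef
      set B := |ψ 0 - ψ x₀ + ⟪p, x₀⟫| with hB
      have hBn : 0 ≤ B := abs_nonneg _
      filter_upwards [(tendsto_norm_cocompact_atTop (E := E)).eventually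
        (Filter.eventually_ge_atTop (2 * C + B + 2))] with y hy
      have h1 := h y
      have h2 : -(C * ‖y‖) ≤ ⟪p - z, y⟫ := neg_le_of_abs_le (abs_real_inner_le_norm _ _)
      have h3 : ψ 0 - ψ x₀ + ⟪p, x₀⟫ ≤ B := le_abs_self _
      simp only [f, norm_zero, inner_zero_left]
      rw [inner_sub_left] at h2
      rw [inner_sub_right] at h1
      rw [real_inner_comm z y]
      nlinarith [norm_nonneg y]
    refine ⟨x, fun y => ?_⟩
    by_contra hcon
    push Not at hcon
    set δ := ψ x + ⟪z - x, y - x⟫ - ψ y with hδ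
    have hδ0 : 0 < δ := by linarith
    have main : ∀ s : ℝ, 0 < s → s ≤ 1 → δ ≤ s * ‖y - x‖ ^ 2 / 2 := by
      intro s hs hs1
      have h1 := hx (x + s • (y - x))
      have h2 := hψ.2 (mem_univ x) (mem_univ y) (sub_nonneg.2 hs1) hs.le (by ring)
      have h3 : (1 - s) • x + s • y = x + s • (y - x) := by
        rw [smul_sub, sub_smul, one_smul]; abel
      rw [h3] at h2
      simp only [f, norm_add_sq_real, norm_smul, inner_add_left, real_inner_smul_left,
        real_inner_smul_right, smul_eq_mul, mul_pow, Real.norm_eq_abs, sq_abs] at h1 h2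
      have h4 : ⟪z - x, y - x⟫ = ⟪y - x, z⟫ - ⟪x, y - x⟫ := by
        rw [inner_sub_left, real_inner_comm z (y - x)]
      have h5 : s * δ ≤ s * (s * ‖y - x‖ ^ 2 / 2) := by
        rw [hδ, h4]; nlinarith
      exact le_of_mul_le_mul_left h5 hs
    set N := ‖y - x‖ ^ 2
    have hN : 0 ≤ N := sq_nonneg _
    have h1 := main (min 1 (δ / (N + 1))) (by positivity) (min_le_left _ _)
    have h2 : min 1 (δ / (N + 1)) * N ≤ δ / (N + 1) * N :=
      mul_le_mul_of_nonneg_right (min_le_right _ _) hN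
    have h3 : δ / (N + 1) * N ≤ δ := by
      rw [div_mul_eq_mul_div, div_le_iff₀ (by positivity)]; nlinarith
    linarith
  choose J hJ using key
  exact ⟨J, hJ⟩

variable {ψ : E → ℝ} {J : E → E}

lemma resolvent_mono
    (hJ : ∀ z y, ψ (J z) + ⟪z - J z, y - J z⟫ ≤ ψ y) (z w : E) : 0 ≤ ⟪J z - J w, (z - w) - (J z - J w)⟫ := by
  have h1 := hJ z (J w)
  have h2 := hJ w (J z)
  have h3 : ⟪J z - J w, (z - w) - (J z - J w)⟫
      = - ⟪z - J z, J w - J z⟫ - ⟪w - J w, J z - J w⟫ := by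
    rw [← neg_sub (J z) (J w), inner_neg_right, real_inner_comm, neg_neg, ← inner_sub_left]
    congr 1; abel
  linarith

lemma resolvent_lipschitz
    (hJ : ∀ z y, ψ (J z) + ⟪z - J z, y - J z⟫ ≤ ψ y) : LipschitzWith 1 J := by
  refine LipschitzWith.of_dist_le_mul fun z w => ?_
  have h := resolvent_mono hJ z w
  rw [inner_sub_right, real_inner_self_eq_norm_sq] at h
  have h2 := real_inner_le_norm (J z - J w) (z - w)
  simp only [dist_eq_norm, NNReal.coe_one, one_mul]
  by_contra hcon
  push Not at hcon
  nlinarith [norm_nonneg (z - w)]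

lemma resolvent_eq
    (hJ : ∀ z y, ψ (J z) + ⟪z - J z, y - J z⟫ ≤ ψ y) {x p : E} (h : ∀ y, ψ x + ⟪p, y - x⟫ ≤ ψ y) : J (x + p) = x := by
  have h1 := hJ (x + p) x
  have h2 := h (J (x + p))
  set y := J (x + p)
  have h3 : ⟪x + p - y, x - y⟫ = ‖x - y‖ ^ 2 - ⟪p, y - x⟫ := by
    rw [← real_inner_self_eq_norm_sq, ← neg_sub x y, inner_neg_right, sub_neg_eq_add,
      ← inner_add_left]
    congr 1; abel
  have h4 : ‖x - y‖ ^ 2 ≤ 0 := by linarith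
  have h5 : ‖x - y‖ = 0 := by nlinarith [norm_nonneg (x - y)]
  exact (sub_eq_zero.1 (norm_eq_zero.1 h5)).symm

lemma resolvent_potential
    (hJ : ∀ z y, ψ (J z) + ⟪z - J z, y - J z⟫ ≤ ψ y) (z : E) :
    HasFDerivAt (fun z => ⟪J z, z⟫ - ‖J z‖ ^ 2 / 2 - ψ (J z)) (innerSL ℝ (J z)) z := by
  set Φ : E → ℝ := fun z => ⟪J z, z⟫ - ‖J z‖ ^ 2 / 2 - ψ (J z) with hΦ
  have hlow : ∀ z w, Φ z + ⟪J z, w - z⟫ ≤ Φ w := by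
    intro z w
    have h1 := hJ w (J z)
    have h2 : 0 ≤ ‖J z - J w‖ ^ 2 := sq_nonneg _
    rw [norm_sub_sq_real] at h2
    simp only [hΦ]
    simp only [inner_sub_left, inner_sub_right, real_inner_self_eq_norm_sq] at h1 ⊢
    have e1 := real_inner_comm (J z) w
    have e2 := real_inner_comm (J w) w
    have e3 := real_inner_comm (J w) (J z)
    linarith
  have hup : ∀ z w, Φ w ≤ Φ z + ⟪J z, w - z⟫ + ‖w - z‖ ^ 2 := by
    intro z w
    have h1 := hlow w z
    have h2 : ⟪J w - J z, w - z⟫ ≤ ‖w - z‖ ^ 2 := by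
      refine (real_inner_le_norm _ _).trans ?_
      rw [sq]
      gcongr
      simpa [dist_eq_norm] using (resolvent_lipschitz hJ).dist_le_mul w z
    rw [inner_sub_left] at h2
    rw [← neg_sub w z, inner_neg_right] at h1
    linarith
  rw [hasFDerivAt_iff_isLittleO]
  have hO : (fun w => Φ w - Φ z - innerSL ℝ (J z) (w - z)) =O[nhds z] fun w => ‖w - z‖ ^ 2 := by
    refine Asymptotics.IsBigO.of_bound 1 (Filter.Eventually.of_forall fun w => ?_)
    have h1 := hlow z w
    have h2 := hup z w
    rw [Real.norm_eq_abs, abs_le, innerSL_apply_apply, Real.norm_eq_abs, abs_of_nonneg (by positivity)]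
    constructor <;> nlinarith [sq_nonneg ‖w - z‖]
  refine hO.trans_isLittleO ?_
  have := (Asymptotics.isLittleO_pow_sub_sub z (show 1 < 2 by norm_num))
  simpa using this

lemma resolvent_deriv_symm
    (hJ : ∀ z y, ψ (J z) + ⟪z - J z, y - J z⟫ ≤ ψ y) {A : E →L[ℝ] E} {z : E} (hA : HasFDerivAt J A z) (u w : E) :
    ⟪A u, w⟫ = ⟪A w, u⟫ := by
  have h1 : HasFDerivAt (fun z => innerSL ℝ (J z)) ((innerSL ℝ).comp A) z :=
    (innerSL ℝ).hasFDerivAt.comp z hA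
  have := second_derivative_symmetric (resolvent_potential hJ) h1 u w
  simpa using this

lemma resolvent_deriv_firm
    (hJ : ∀ z y, ψ (J z) + ⟪z - J z, y - J z⟫ ≤ ψ y) {A : E →L[ℝ] E} {z : E} (hA : HasFDerivAt J A z) (u : E) :
    0 ≤ ⟪A u, u - A u⟫ := by
  have h1 : HasDerivAt (fun s : ℝ => J (z + s • u)) (A u) 0 := by
    have hl : HasDerivAt (fun s : ℝ => z + s • u) u 0 := by
      simpa using ((hasDerivAt_id (0:ℝ)).smul_const u).const_add z
    have hf : HasFDerivAt J A (z + (0:ℝ) • u) := by simpa using hA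
    exact hf.comp_hasDerivAt (0:ℝ) hl
  have h2 := h1.tendsto_slope_zero
  simp only [zero_add, zero_smul, add_zero] at h2
  have h3 : Filter.Tendsto (fun t : ℝ => ⟪t⁻¹ • (J (z + t • u) - J z),
      u - t⁻¹ • (J (z + t • u) - J z)⟫) (nhdsWithin 0 {0}ᶜ) (nhds ⟪A u, u - A u⟫) :=
    h2.inner (tendsto_const_nhds.sub h2)
  refine ge_of_tendsto h3 ?_
  filter_upwards [self_mem_nhdsWithin] with t ht
  have ht : t ≠ 0 := ht
  have h4 := resolvent_mono hJ (z + t • u) z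
  have h5 : u - t⁻¹ • (J (z + t • u) - J z)
      = t⁻¹ • ((z + t • u - z) - (J (z + t • u) - J z)) := by
    rw [add_sub_cancel_left, smul_sub t⁻¹ (t • u), smul_smul, inv_mul_cancel₀ ht, one_smul]
  rw [h5, real_inner_smul_left, real_inner_smul_right, ← mul_assoc]
  exact mul_nonneg (mul_self_nonneg _) h4

end ConvexPart

/-- Quasi-concavity of the determinant along the segment from `A` to `1 - A`. -/
lemma det_interp_ge {E : Type*} [NormedAddCommGroup E] [InnerProductSpace ℝ E]
    [FiniteDimensional ℝ E] (A : E →L[ℝ] E) (hs : ∀ u w, ⟪A u, w⟫ = ⟪A w, u⟫)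
    (hf : ∀ u, 0 ≤ ⟪A u, u - A u⟫) (t : ℝ) (ht : t ∈ Icc (0:ℝ) 1) :
    min |A.det| |(ContinuousLinearMap.id ℝ E - A).det|
      ≤ |((1 - t) • A + t • (ContinuousLinearMap.id ℝ E - A)).det| := by
  have hsym : (A : E →ₗ[ℝ] E).IsSymmetric := fun u w => by
    have := hs u w
    simp only [ContinuousLinearMap.coe_coe]
    rw [this, real_inner_comm]
  set b := hsym.eigenvectorBasis rfl with hb
  set a := hsym.eigenvalues rfl with ha
  have hAb : ∀ i, A (b i) = a i • b i := fun i => by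
    exact hsym.apply_eigenvectorBasis rfl i
  have hdet : ∀ B : E →L[ℝ] E, ∀ c : _ → ℝ, (∀ i, B (b i) = c i • b i) → B.det = ∏ i, c i := by
    intro B c hc
    rw [ContinuousLinearMap.det, ← LinearMap.det_toMatrix b.toBasis]
    have : LinearMap.toMatrix b.toBasis b.toBasis (B : E →ₗ[ℝ] E) = Matrix.diagonal c := by
      ext i j
      simp [LinearMap.toMatrix_apply, Matrix.diagonal_apply, hc, eq_comm]
      split_ifs with hij
      · rw [hij]
      · rfl
    rw [this, Matrix.det_diagonal]
  have ha01 : ∀ i, 0 ≤ a i ∧ 0 ≤ 1 - a i := by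
    intro i
    have h := hf (b i)
    rw [hAb, inner_sub_right, real_inner_smul_left, real_inner_smul_right, real_inner_smul_left,
      real_inner_self_eq_norm_sq, b.norm_eq_one] at h
    constructor <;> nlinarith
  rw [hdet A a hAb, hdet _ (fun i => 1 - a i) (fun i => by simp [hAb, sub_smul]),
    hdet _ (fun i => (1 - t) * a i + t * (1 - a i)) (fun i => by
      simp [hAb, sub_smul, add_smul, mul_smul, smul_sub])]
  have h0 : 0 ≤ ∏ i, a i := Finset.prod_nonneg fun i _ => (ha01 i).1
  have h1 : 0 ≤ ∏ i, (1 - a i) := Finset.prod_nonneg fun i _ => (ha01 i).2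
  have ht1 : 0 ≤ 1 - t := by linarith [ht.2]
  have h2 : (∏ i, a i) ^ (1 - t) * (∏ i, (1 - a i)) ^ t
      ≤ ∏ i, ((1 - t) * a i + t * (1 - a i)) := by
    rw [← Real.finsetProd_rpow _ _ (fun i _ => (ha01 i).1),
      ← Real.finsetProd_rpow _ _ (fun i _ => (ha01 i).2), ← Finset.prod_mul_distrib]
    refine Finset.prod_le_prod (fun i _ => ?_) (fun i _ => ?_)
    · exact mul_nonneg (Real.rpow_nonneg (ha01 i).1 _) (Real.rpow_nonneg (ha01 i).2 _)
    · exact Real.geom_mean_le_arith_mean2_weighted ht1 ht.1 (ha01 i).1 (ha01 i).2 (by ring)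
  rw [abs_of_nonneg h0, abs_of_nonneg h1]
  refine le_trans ?_ (h2.trans (le_abs_self _))
  set P := ∏ i, a i
  set Q := ∏ i, (1 - a i)
  have hm : 0 ≤ min P Q := le_min h0 h1
  calc min P Q = (min P Q) ^ (1 - t) * (min P Q) ^ t := by
        rw [← Real.rpow_add_of_nonneg hm ht1 ht.1]; simp
    _ ≤ P ^ (1 - t) * Q ^ t := by
        gcongr
        · exact min_le_left _ _
        · exact ht.1
        · exact min_le_right _ _

section MeasurePart

open scoped MeasureTheory

variable {E : Type*} [NormedAddCommGroup E] [InnerProductSpace ℝ E] [FiniteDimensional ℝ E]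
  [MeasurableSpace E] [BorelSpace E]

/-- If the image of `σ` is dominated by Lebesgue measure, then `σ` of a set is at most the
Lebesgue (outer) measure of its image. -/
lemma measure_le_image_of_map_le {σ : Measure E} {f : E → E} (hf : Measurable f)
    (h : σ.map f ≤ volume) (s : Set E) : σ s ≤ volume (f '' s) := by
  calc σ s ≤ σ (f ⁻¹' (toMeasurable volume (f '' s))) :=
        measure_mono fun x hx => subset_toMeasurable _ _ (mem_image_of_mem f hx)
    _ = σ.map f (toMeasurable volume (f '' s)) :=
        (Measure.map_apply hf (measurableSet_toMeasurable _ _)).symm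
    _ ≤ volume (toMeasurable volume (f '' s)) := h _
    _ = volume (f '' s) := measure_toMeasurable _

lemma interp_injective {E : Type*} [NormedAddCommGroup E] [InnerProductSpace ℝ E]
    {ψ : E → ℝ} {J : E → E}
    (hJ : ∀ z y, ψ (J z) + ⟪z - J z, y - J z⟫ ≤ ψ y) {t : ℝ} (ht : t ∈ Ioo (0:ℝ) 1) :
    Function.Injective (fun z => (1 - t) • J z + t • (z - J z)) := by
  intro z w hzw
  have hm := resolvent_mono hJ z w
  set a := J z - J w with ha
  set b := (z - w) - a with hb
  have h1 : (1 - t) • a + t • b = 0 := by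
    have : (1 - t) • a + t • b
        = ((1 - t) • J z + t • (z - J z)) - ((1 - t) • J w + t • (w - J w)) := by
      rw [hb, ha]; module
    rw [this]; exact sub_eq_zero.2 hzw
  have h2 : ‖(1 - t) • a + t • b‖ ^ 2 = 0 := by rw [h1]; simp
  rw [norm_add_sq_real, real_inner_smul_left, real_inner_smul_right, norm_smul, norm_smul,
    mul_pow, mul_pow, Real.norm_eq_abs, Real.norm_eq_abs, sq_abs, sq_abs] at h2
  have ht1 : 0 < 1 - t := sub_pos.2 ht.2
  have ht0 := ht.1
  have p1 : 0 ≤ (1 - t) ^ 2 * ‖a‖ ^ 2 := by positivity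
  have p2 : 0 ≤ 2 * ((1 - t) * (t * ⟪a, b⟫)) := by positivity
  have p3 : 0 ≤ t ^ 2 * ‖b‖ ^ 2 := by positivity
  have q1 : (1 - t) ^ 2 * ‖a‖ ^ 2 = 0 := by linarith
  have q3 : t ^ 2 * ‖b‖ ^ 2 = 0 := by linarith
  have a0 : a = 0 := by
    simpa [ht1.ne'] using q1
  have b0 : b = 0 := by
    simpa [ht0.ne'] using q3
  rw [a0, sub_zero] at hb
  rw [b0] at hb
  exact sub_eq_zero.1 hb.symm

/-- The McCann `L^∞` bound: the displacement interpolation is dominated by Lebesgue measure. -/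
lemma map_interp_le {ψ : E → ℝ} {J : E → E}
    (hJ : ∀ z y, ψ (J z) + ⟪z - J z, y - J z⟫ ≤ ψ y) {σ : Measure E}
    (h0 : σ.map J ≤ volume) (h1 : σ.map (fun z => z - J z) ≤ volume)
    {t : ℝ} (ht : t ∈ Ioo (0:ℝ) 1) :
    σ.map (fun z => (1 - t) • J z + t • (z - J z)) ≤ volume := by
  have hlip := resolvent_lipschitz hJ
  have hJc : Continuous J := hlip.continuous
  have hKm : Measurable (fun z => z - J z) := (continuous_id.sub hJc).measurable
  have hMm : Measurable (fun z => (1 - t) • J z + t • (z - J z)) := by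
    have : Continuous (fun z => (1 - t) • J z + t • (z - J z)) := by fun_prop
    exact this.measurable
  set G : Set E := {z | DifferentiableAt ℝ J z} with hG
  have hGm : MeasurableSet G := measurableSet_of_differentiableAt ℝ J
  have hG0 : volume Gᶜ = 0 := hlip.ae_differentiableAt
  have hac : ∀ s, volume s = 0 → σ s = 0 := by
    intro s hs
    refine le_antisymm ((measure_le_image_of_map_le hJc.measurable h0 s).trans ?_) bot_le
    have hH : (volume : Measure E) ≪ μH[Module.finrank ℝ E] :=
      Measure.absolutelyContinuous_isAddHaarMeasure _ _
    have hH' : (μH[Module.finrank ℝ E] : Measure E) ≪ volume :=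
      Measure.absolutelyContinuous_isAddHaarMeasure _ _
    have h2 := hlip.hausdorffMeasure_image_le (d := Module.finrank ℝ E) (by positivity) s
    rw [hH' hs, mul_zero] at h2
    exact (hH (le_antisymm h2 bot_le)).le
  set A : E → E →L[ℝ] E := fderiv ℝ J with hA
  have hAG : ∀ z ∈ G, HasFDerivAt J (A z) z := fun z hz => DifferentiableAt.hasFDerivAt hz
  have hAm : Measurable A := measurable_fderiv ℝ J
  set f0 : E → ℝ≥0∞ := fun z => ENNReal.ofReal |(A z).det| with hf0
  set f1 : E → ℝ≥0∞ := fun z => ENNReal.ofReal |(ContinuousLinearMap.id ℝ E - A z).det| with hf1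
  have hdm : Measurable (fun B : E →L[ℝ] E => B.det) := ContinuousLinearMap.continuous_det.measurable
  have hf0m : Measurable f0 := (hdm.comp hAm).abs.ennreal_ofReal
  have hf1m : Measurable f1 := (hdm.comp (hAm.const_sub _)).abs.ennreal_ofReal
  have hs0 : ∀ s, MeasurableSet s → s ⊆ G → σ s ≤ ∫⁻ z in s, f0 z := fun s hs hsG =>
    (measure_le_image_of_map_le hJc.measurable h0 s).trans
      (addHaar_image_le_lintegral_abs_det_fderiv volume hs
        fun z hz => (hAG z (hsG hz)).hasFDerivWithinAt)
  have hs1 : ∀ s, MeasurableSet s → s ⊆ G → σ s ≤ ∫⁻ z in s, f1 z := fun s hs hsG =>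
    (measure_le_image_of_map_le hKm h1 s).trans
      (addHaar_image_le_lintegral_abs_det_fderiv volume hs
        fun z hz => ((hasFDerivAt_id z).sub (hAG z (hsG hz))).hasFDerivWithinAt)
  have hs : ∀ s, MeasurableSet s → s ⊆ G → σ s ≤ ∫⁻ z in s, min (f0 z) (f1 z) := by
    intro s hsm hsG
    set P : Set E := {z | f0 z ≤ f1 z} with hP
    have hPm : MeasurableSet P := measurableSet_le hf0m hf1m
    rw [← measure_inter_add_sdiff s hPm, ← lintegral_inter_add_sdiff _ s hPm]
    refine add_le_add ?_ ?_
    · refine (hs0 _ (hsm.inter hPm) (inter_subset_left.trans hsG)).trans_eq ?_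
      refine setLIntegral_congr_fun (hsm.inter hPm) fun z hz => ?_
      exact (min_eq_left hz.2).symm
    · refine (hs1 _ (hsm.diff hPm) (sdiff_subset.trans hsG)).trans_eq ?_
      refine setLIntegral_congr_fun (hsm.diff hPm) fun z hz => ?_
      exact (min_eq_right (not_le.1 hz.2).le).symm
  refine Measure.le_iff.2 fun B hB => ?_
  rw [Measure.map_apply hMm hB]
  set s : Set E := (fun z => (1 - t) • J z + t • (z - J z)) ⁻¹' B with hsdef
  have hsm : MeasurableSet s := hMm hB
  calc σ s = σ (s ∩ G) := by
        rw [← measure_inter_add_sdiff s hGm, hac (s \ G) (measure_mono_null (fun z hz => hz.2) hG0),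
          add_zero]
    _ ≤ ∫⁻ z in s ∩ G, min (f0 z) (f1 z) := hs _ (hsm.inter hGm) inter_subset_right
    _ ≤ ∫⁻ z in s ∩ G, ENNReal.ofReal
          |((1 - t) • A z + t • (ContinuousLinearMap.id ℝ E - A z)).det| := by
        refine setLIntegral_mono' (hsm.inter hGm) fun z hz => ?_
        rw [hf0, hf1]
        simp only
        rw [← ENNReal.ofReal_min]
        exact ENNReal.ofReal_le_ofReal (det_interp_ge (A z) (resolvent_deriv_symm hJ (hAG z hz.2))
          (resolvent_deriv_firm hJ (hAG z hz.2)) t (Ioo_subset_Icc_self ht))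
    _ = volume ((fun z => (1 - t) • J z + t • (z - J z)) '' (s ∩ G)) :=
        lintegral_abs_det_fderiv_eq_addHaar_image volume (hsm.inter hGm)
          (fun z hz => (((hAG z hz.2).const_smul (1 - t)).add
            (((hasFDerivAt_id z).sub (hAG z hz.2)).const_smul t)).hasFDerivWithinAt)
          (interp_injective hJ ht).injOn
    _ ≤ volume B := by
        refine measure_mono ?_
        rintro _ ⟨z, hz, rfl⟩
        exact hz.1

/-- Jointly measurable densities for a family of measures dominated by Lebesgue measure. -/
lemma exists_density (κ : ProbabilityTheory.Kernel ℝ E) [ProbabilityTheory.IsFiniteKernel κ]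
    (R : ℝ) (I : Set ℝ)
    (h : ∀ t ∈ I, κ t ≤ (volume : Measure E).restrict (Metric.closedBall 0 R)) :
    ∃ ρ : E → ℝ → ℝ, Measurable (fun q : E × ℝ => ρ q.1 q.2) ∧
      (∀ x t, ρ x t ∈ Icc (0:ℝ) 1) ∧
      ∀ t ∈ I, volume.withDensity (fun x => ENNReal.ofReal (ρ x t)) = κ t := by
  set m : Measure E := (volume : Measure E).restrict (Metric.closedBall 0 R) with hm
  have : IsFiniteMeasure m := by
    rw [hm]
    exact isFiniteMeasure_restrict.2 (isCompact_closedBall _ _).measure_lt_top.ne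
  set η : ProbabilityTheory.Kernel ℝ E := ProbabilityTheory.Kernel.const ℝ m with hη
  set g : ℝ → E → ℝ≥0∞ := ProbabilityTheory.Kernel.rnDeriv κ η with hg
  have hgm : Measurable (fun p : ℝ × E => g p.1 p.2) :=
    ProbabilityTheory.Kernel.measurable_rnDeriv κ η
  refine ⟨fun x t => (Metric.closedBall (0:E) R).indicator (fun x => (min (g t x) 1).toReal) x,
    ?_, ?_, ?_⟩
  · have h1 : Measurable (fun q : E × ℝ => (min (g q.2 q.1) 1).toReal) :=
      ((hgm.comp measurable_swap).min measurable_const).ennreal_toReal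
    have h2 : MeasurableSet (Prod.fst ⁻¹' (Metric.closedBall (0:E) R) : Set (E × ℝ)) :=
      measurable_fst Metric.isClosed_closedBall.measurableSet
    exact h1.indicator h2
  · intro x t
    by_cases hx : x ∈ Metric.closedBall (0:E) R
    · simp only [indicator_of_mem hx]
      refine ⟨ENNReal.toReal_nonneg, ?_⟩
      exact ENNReal.toReal_le_of_le_ofReal zero_le_one (by simp)
    · simp [indicator_of_notMem hx]
  · intro t ht
    have hle : κ t ≤ m := h t ht
    have h1 : (η.withDensity g) t = κ t := ProbabilityTheory.Kernel.withDensity_rnDeriv_eq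
      (Measure.absolutelyContinuous_of_le hle)
    rw [ProbabilityTheory.Kernel.withDensity_apply _ hgm] at h1
    have hηt : η t = m := rfl
    rw [hηt] at h1
    have h2 : ∀ᵐ x ∂m, g t x ≤ 1 := by
      refine ae_le_of_forall_setLIntegral_le_of_sigmaFinite
        (hgm.comp measurable_prodMk_left) fun s hs _ => ?_
      rw [← withDensity_apply _ hs, h1]
      simpa using hle s
    have h3 : (fun x => ENNReal.ofReal ((Metric.closedBall (0:E) R).indicator
        (fun x => (min (g t x) 1).toReal) x))
        = (Metric.closedBall (0:E) R).indicator (fun x => min (g t x) 1) := by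
      funext x
      by_cases hx : x ∈ Metric.closedBall (0:E) R
      · simp only [indicator_of_mem hx]
        exact ENNReal.ofReal_toReal (ne_top_of_le_ne_top ENNReal.one_ne_top (min_le_right _ _))
      · simp [indicator_of_notMem hx]
    rw [h3, withDensity_indicator Metric.isClosed_closedBall.measurableSet, ← hm, ← h1]
    refine withDensity_congr_ae ?_
    filter_upwards [h2] with x hx
    exact min_eq_left hx

end MeasurePart

section TransportPart

variable {E : Type*} [NormedAddCommGroup E] [InnerProductSpace ℝ E] [FiniteDimensional ℝ E]
  [MeasurableSpace E] [BorelSpace E]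

lemma integrable_comp_of_mem_compact {X Y : Type*} [MeasurableSpace X] [TopologicalSpace Y]
    [MeasurableSpace Y] [OpensMeasurableSpace Y] {m : Measure X} [IsFiniteMeasure m]
    {f : Y → ℝ} (hf : Continuous f) {K : Set Y} (hK : IsCompact K) {g : X → Y}
    (hg : Measurable g) (h : ∀ᵐ x ∂m, g x ∈ K) : Integrable (fun x => f (g x)) m := by
  obtain ⟨C, hC⟩ := hK.exists_bound_of_continuousOn hf.continuousOn
  refine Integrable.of_bound (hf.measurable.comp hg).aestronglyMeasurable C ?_
  filter_upwards [h] with x hx using hC _ hx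

/-- Optimality of the gradient map (Kantorovich duality with bounded potentials). -/
lemma cost_le {ψ : E → ℝ} (hψ : Continuous ψ) {T : E → E} (hT : Measurable T) {μ₀ : Measure E}
    [IsFiniteMeasure μ₀] {R : ℝ} (h0 : ∀ᵐ x ∂μ₀, x ∈ Metric.closedBall (0:E) R)
    (h1 : ∀ᵐ x ∂μ₀, T x ∈ Metric.closedBall (0:E) R)
    (hsub : ∀ᵐ x ∂μ₀, ∀ y, ψ x + ⟪T x, y - x⟫ ≤ ψ y) (π : Measure (E × E))
    (hπ0 : π.map Prod.fst = μ₀) (hπ1 : π.map Prod.snd = μ₀.map T) :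
    ∫⁻ x, ENNReal.ofReal (‖x - T x‖ ^ 2) ∂μ₀
      ≤ ∫⁻ q, ENNReal.ofReal (‖q.1 - q.2‖ ^ 2) ∂π := by
  set K := Metric.closedBall (0:E) R with hKdef
  have hK : IsCompact K := isCompact_closedBall _ _
  have hKm : MeasurableSet K := Metric.isClosed_closedBall.measurableSet
  have hπfin : IsFiniteMeasure π := by
    refine ⟨?_⟩
    have : π univ = μ₀ univ := by
      rw [← hπ0, Measure.map_apply measurable_fst MeasurableSet.univ, preimage_univ]
    rw [this]; exact measure_lt_top _ _
  have hπK0 : ∀ᵐ q ∂π, q.1 ∈ K := by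
    rw [← hπ0] at h0
    exact ae_of_ae_map measurable_fst.aemeasurable h0
  have hπK1 : ∀ᵐ q ∂π, q.2 ∈ K := by
    have : ∀ᵐ y ∂(μ₀.map T), y ∈ K := (ae_map_iff hT.aemeasurable hKm).2 h1
    rw [← hπ1] at this
    exact ae_of_ae_map measurable_snd.aemeasurable this
  set φ : E → ℝ := fun y => sSup ((fun x => ⟪x, y⟫ - ψ x) '' K) with hφ
  have hφc : Continuous φ := by
    refine hK.continuous_sSup (f := fun y x => ⟪x, y⟫ - ψ x) ?_
    simp only [Function.HasUncurry.uncurry, id]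
    fun_prop
  have hφ1 : ∀ x ∈ K, ∀ y, ⟪x, y⟫ - ψ x ≤ φ y := by
    intro x hx y
    refine le_csSup ?_ (mem_image_of_mem _ hx)
    exact (hK.image (by fun_prop)).bddAbove
  have hφ2 : ∀ᵐ x ∂μ₀, φ (T x) ≤ ⟪x, T x⟫ - ψ x := by
    filter_upwards [hsub, h0] with x hx hxK
    refine csSup_le ⟨_, mem_image_of_mem _ hxK⟩ ?_
    rintro _ ⟨y, -, rfl⟩
    have := hx y
    rw [inner_sub_right, real_inner_comm y, real_inner_comm x] at this
    simp only
    linarith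
  set a : E → ℝ := fun x => ‖x‖ ^ 2 - 2 * ψ x with ha
  set b : E → ℝ := fun y => ‖y‖ ^ 2 - 2 * φ y with hb
  have hac : Continuous a := by fun_prop
  have hbc : Continuous b := by fun_prop
  have hcc : Continuous (fun q : E × E => ‖q.1 - q.2‖ ^ 2) := by fun_prop
  have hcπ : Integrable (fun q : E × E => ‖q.1 - q.2‖ ^ 2) π :=
    integrable_comp_of_mem_compact hcc (hK.prod hK) measurable_id
      (by filter_upwards [hπK0, hπK1] with q h h' using ⟨h, h'⟩)
  have hcμ : Integrable (fun x : E => ‖x - T x‖ ^ 2) μ₀ :=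
    integrable_comp_of_mem_compact hcc (hK.prod hK) (measurable_id.prodMk hT)
      (by filter_upwards [h0, h1] with q h h' using ⟨h, h'⟩)
  have haπ : Integrable (fun q : E × E => a q.1) π :=
    integrable_comp_of_mem_compact hac hK measurable_fst hπK0
  have hbπ : Integrable (fun q : E × E => b q.2) π :=
    integrable_comp_of_mem_compact hbc hK measurable_snd hπK1
  have haμ : Integrable (fun x : E => a x) μ₀ :=
    integrable_comp_of_mem_compact hac hK measurable_id h0
  have hbμ : Integrable (fun x : E => b (T x)) μ₀ :=
    integrable_comp_of_mem_compact hbc hK hT h1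
  rw [← ofReal_integral_eq_lintegral_ofReal hcπ (Filter.Eventually.of_forall fun q => sq_nonneg _),
    ← ofReal_integral_eq_lintegral_ofReal hcμ (Filter.Eventually.of_forall fun q => sq_nonneg _)]
  refine ENNReal.ofReal_le_ofReal ?_
  calc ∫ x, ‖x - T x‖ ^ 2 ∂μ₀ ≤ ∫ x, (a x + b (T x)) ∂μ₀ := by
        refine integral_mono_ae hcμ (haμ.add hbμ) ?_
        filter_upwards [hφ2] with x hx
        simp only [ha, hb, norm_sub_sq_real]
        linarith
    _ = ∫ x, a x ∂μ₀ + ∫ x, b (T x) ∂μ₀ := integral_add haμ hbμ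
    _ = ∫ q, a q.1 ∂π + ∫ q, b q.2 ∂π := by
        congr 1
        · rw [← hπ0, integral_map measurable_fst.aemeasurable hac.aestronglyMeasurable]
        · rw [← integral_map hT.aemeasurable hbc.aestronglyMeasurable, ← hπ1,
            integral_map measurable_snd.aemeasurable hbc.aestronglyMeasurable]
    _ = ∫ q, (a q.1 + b q.2) ∂π := (integral_add haπ hbπ).symm
    _ ≤ ∫ q, ‖q.1 - q.2‖ ^ 2 ∂π := by
        refine integral_mono_ae (haπ.add hbπ) hcπ ?_
        filter_upwards [hπK0] with q hq
        have := hφ1 q.1 hq q.2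
        simp only [ha, hb, norm_sub_sq_real]
        linarith

lemma fderiv_bound {G F : Type*} [NormedAddCommGroup G] [NormedSpace ℝ G] [NormedAddCommGroup F]
    [NormedSpace ℝ F] {U : G → F} (hU1 : ContDiff ℝ 1 U) (hUc : HasCompactSupport U) :
    ∃ M, ∀ z, ‖fderiv ℝ U z‖ ≤ M := by
  obtain ⟨M, hM⟩ := (hUc.fderiv ℝ).exists_bound_of_continuous
    (hU1.continuous_fderiv one_ne_zero)
  exact ⟨M, hM⟩

/-- The fundamental computation behind both weak equations, in Lagrangian coordinates. -/
lemma weak_integral {F : Type*} [NormedAddCommGroup F] [InnerProductSpace ℝ F]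
    {T : E → E} (hT : Measurable T) {μ₀ : Measure E}
    [IsFiniteMeasure μ₀] {R : ℝ} (h0 : ∀ᵐ x ∂μ₀, x ∈ Metric.closedBall (0:E) R)
    (h1 : ∀ᵐ x ∂μ₀, T x ∈ Metric.closedBall (0:E) R)
    {U : E × ℝ → F} (hU : ContDiff ℝ (⊤ : ℕ∞) U) (hUc : HasCompactSupport U)
    (hUs : tsupport U ⊆ Set.univ ×ˢ Ioo (0:ℝ) 1)
    {c : E → F} (hc : StronglyMeasurable c) {C : ℝ} (hcC : ∀ᵐ x ∂μ₀, ‖c x‖ ≤ C) :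
    ∫ t in Icc (0:ℝ) 1, ∫ x, ⟪c x, fderiv ℝ U ((1 - t) • x + t • T x, t) (T x - x, 1)⟫ ∂μ₀
      = 0 := by
  have hU1 : ContDiff ℝ 1 U := hU.of_le (by exact_mod_cast le_top)
  have hDc : Continuous (fderiv ℝ U) := hU1.continuous_fderiv one_ne_zero
  obtain ⟨M, hM⟩ : ∃ M, ∀ z, ‖fderiv ℝ U z‖ ≤ M :=
    fderiv_bound hU1 hUc
  have hTs : StronglyMeasurable T := hT.stronglyMeasurable
  have hmeas : StronglyMeasurable (fun p : ℝ × E =>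
      ⟪c p.2, fderiv ℝ U ((1 - p.1) • p.2 + p.1 • T p.2, p.1) (T p.2 - p.2, 1)⟫) := by
    have hT2 : StronglyMeasurable (fun p : ℝ × E => T p.2) := hTs.comp_measurable measurable_snd
    have hc2 : StronglyMeasurable (fun p : ℝ × E => c p.2) := hc.comp_measurable measurable_snd
    have hp1 : StronglyMeasurable (fun p : ℝ × E => p.1) := measurable_fst.stronglyMeasurable
    have hp2 : StronglyMeasurable (fun p : ℝ × E => p.2) := measurable_snd.stronglyMeasurable
    have hγ : StronglyMeasurable (fun p : ℝ × E => ((1 - p.1) • p.2 + p.1 • T p.2, p.1)) :=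
      ((((stronglyMeasurable_const.sub hp1).smul hp2).add (hp1.smul hT2))).prodMk hp1
    have hv : StronglyMeasurable (fun p : ℝ × E => (T p.2 - p.2, (1:ℝ))) :=
      (hT2.sub hp2).prodMk stronglyMeasurable_const
    have hap : StronglyMeasurable (fun p : ℝ × E =>
        fderiv ℝ U ((1 - p.1) • p.2 + p.1 • T p.2, p.1) (T p.2 - p.2, 1)) :=
      (isBoundedBilinearMap_apply (𝕜 := ℝ) (E := E × ℝ) (F := F)).continuous.comp_stronglyMeasurable
        ((hDc.comp_stronglyMeasurable hγ).prodMk hv)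
    exact hc2.inner hap
  have hbound : ∀ᵐ x ∂μ₀, ∀ t : ℝ,
      ‖⟪c x, fderiv ℝ U ((1 - t) • x + t • T x, t) (T x - x, 1)⟫‖ ≤ C * (M * (2 * R + 1)) := by
    filter_upwards [h0, h1, hcC] with x hx hTx hcx t
    have hM0 : 0 ≤ M := (ContinuousLinearMap.opNorm_nonneg _).trans (hM 0)
    have hC0 : 0 ≤ C := (norm_nonneg _).trans hcx
    have hR0 : 0 ≤ R := by
      simp at hx; exact (norm_nonneg _).trans hx
    refine (norm_inner_le_norm _ _).trans ?_
    refine mul_le_mul hcx ?_ (norm_nonneg _) hC0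
    refine (ContinuousLinearMap.le_opNorm _ _).trans ?_
    refine mul_le_mul (hM _) ?_ (norm_nonneg _) hM0
    rw [Prod.norm_mk, max_le_iff]
    simp only [mem_closedBall_zero_iff] at hx hTx
    constructor
    · refine (norm_sub_le _ _).trans ?_
      linarith
    · simp; linarith
  have hint : Integrable (Function.uncurry fun (t : ℝ) (x : E) =>
      ⟪c x, fderiv ℝ U ((1 - t) • x + t • T x, t) (T x - x, 1)⟫)
      ((volume.restrict (Icc (0:ℝ) 1)).prod μ₀) := by
    refine Integrable.of_bound hmeas.aestronglyMeasurable (C * (M * (2 * R + 1))) ?_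
    have := Measure.quasiMeasurePreserving_snd (μ := volume.restrict (Icc (0:ℝ) 1)) (ν := μ₀)
    filter_upwards [this.ae hbound] with p hp
    exact hp p.1
  rw [integral_integral_swap hint]
  have hzero : ∀ x, ∀ t, t ∉ Ioo (0:ℝ) 1 → U (x, t) = 0 := fun x t ht => by
    by_contra hne
    exact ht (hUs (subset_tsupport U hne)).2
  have hx : ∀ x, ∫ t in Icc (0:ℝ) 1,
      ⟪c x, fderiv ℝ U ((1 - t) • x + t • T x, t) (T x - x, 1)⟫ = 0 := by
    intro x
    rw [integral_Icc_eq_integral_Ioc, ← intervalIntegral.integral_of_le zero_le_one]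
    have hd : ∀ t : ℝ, HasDerivAt (fun t : ℝ => ⟪c x, U ((1 - t) • x + t • T x, t)⟫)
        ⟪c x, fderiv ℝ U ((1 - t) • x + t • T x, t) (T x - x, 1)⟫ t := by
      intro t
      have hγ : HasDerivAt (fun t : ℝ => ((1 - t) • x + t • T x, t)) (T x - x, (1:ℝ)) t := by
        refine HasDerivAt.prodMk ?_ (hasDerivAt_id t)
        have := (((hasDerivAt_id t).const_sub 1).smul_const x).add
          ((hasDerivAt_id t).smul_const (T x))
        refine this.congr_deriv ?_
        module
      have hUd : HasFDerivAt U (fderiv ℝ U ((1 - t) • x + t • T x, t))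
          ((1 - t) • x + t • T x, t) :=
        (hU.differentiable (by simp) _).hasFDerivAt
      have h3 := HasFDerivAt.comp_hasDerivAt (f := fun t : ℝ => ((1 - t) • x + t • T x, t)) t hUd hγ
      exact (innerSL ℝ (c x)).hasFDerivAt.comp_hasDerivAt t h3
    rw [intervalIntegral.integral_eq_sub_of_hasDerivAt (fun t _ => hd t)]
    · simp [hzero]
    · refine Continuous.intervalIntegrable ?_ _ _
      fun_prop
  simp [hx]

/-- Eulerian to Lagrangian change of variables. -/
lemma integral_density_eq {μ₀ : Measure E} {r : E → ℝ} (hr : Measurable r) (hr0 : ∀ x, 0 ≤ r x)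
    {S : E → E} (hS : Measurable S)
    (h : volume.withDensity (fun x => ENNReal.ofReal (r x)) = μ₀.map S)
    {G : E → ℝ} (hG : Measurable G) :
    ∫ x, r x * G x = ∫ x, G (S x) ∂μ₀ := by
  rw [← integral_map hS.aemeasurable hG.aestronglyMeasurable, ← h,
    integral_withDensity_eq_integral_toReal_smul hr.ennreal_ofReal
      (Filter.Eventually.of_forall fun x => ENNReal.ofReal_lt_top)]
  simp [ENNReal.toReal_ofReal, hr0]

end TransportPart

section TestFunctions

variable {E F : Type*} [NormedAddCommGroup E] [NormedSpace ℝ E] [NormedAddCommGroup F]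
  [NormedSpace ℝ F]

lemma deriv_time_eq {U : E × ℝ → F} (hU : ContDiff ℝ 1 U) (x : E) (t : ℝ) :
    deriv (fun s => U (x, s)) t = fderiv ℝ U (x, t) (0, 1) := by
  have h1 : HasFDerivAt U (fderiv ℝ U (x, t)) (x, t) :=
    (hU.differentiable one_ne_zero _).hasFDerivAt
  have h2 : HasDerivAt (fun s : ℝ => (x, s)) ((0 : E), (1:ℝ)) t :=
    (hasDerivAt_const t x).prodMk (hasDerivAt_id t)
  exact (HasFDerivAt.comp_hasDerivAt (f := fun s : ℝ => (x, s)) t h1 h2).deriv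

lemma fderiv_space_eq {U : E × ℝ → F} (hU : ContDiff ℝ 1 U) (x : E) (t : ℝ) (u : E) :
    fderiv ℝ (fun y => U (y, t)) x u = fderiv ℝ U (x, t) (u, 0) := by
  have h1 : HasFDerivAt U (fderiv ℝ U (x, t)) (x, t) :=
    (hU.differentiable one_ne_zero _).hasFDerivAt
  have h2 : HasFDerivAt (fun y : E => (y, t)) (ContinuousLinearMap.inl ℝ E ℝ) x :=
    hasFDerivAt_prodMk_left x t
  have h3 := (HasFDerivAt.comp (f := fun y : E => (y, t)) x h1 h2).fderiv
  have h4 : (U ∘ fun y : E => (y, t)) = fun y => U (y, t) := rfl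
  rw [h4] at h3
  rw [h3]
  simp

lemma measurable_fderiv_apply [FiniteDimensional ℝ E] [MeasurableSpace E] [BorelSpace E]
    [MeasurableSpace F] [BorelSpace F] {U : E × ℝ → F} (hU : ContDiff ℝ 1 U) (t : ℝ)
    {u : E → E} (hu : Measurable u) :
    Measurable (fun x => fderiv ℝ U (x, t) (u x, 1)) := by
  have hDc : Continuous (fderiv ℝ U) := hU.continuous_fderiv one_ne_zero
  have h1 : StronglyMeasurable (fun x : E => fderiv ℝ U (x, t)) :=
    (hDc.comp (continuous_id.prodMk continuous_const)).stronglyMeasurable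
  have h2 : StronglyMeasurable (fun x : E => (u x, (1:ℝ))) :=
    hu.stronglyMeasurable.prodMk stronglyMeasurable_const
  exact ((isBoundedBilinearMap_apply (𝕜 := ℝ) (E := E × ℝ)
    (F := F)).continuous.comp_stronglyMeasurable (h1.prodMk h2)).measurable

end TestFunctions

/-- **part of Theorem 1.6.** The Wasserstein geodesic (displacement
interpolant) `μ_t = ((1−t)id + tT)_#(ρ₀ dx)` between compactly supported densities
`ρ₀, ρ₁ : ℝ^d → [0,1]` is realized by a pair `(ρ, v)` with `ρ(·,t) dx = μ_t`, total
action equal to `d_W(ρ₀ dx, ρ₁ dx)² < ∞`, which is a weak solution of the pressureless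
Euler system on `ℝ^d × (0,1)`. -/
theorem wasserstein_geodesic_is_pressureless_euler_solution
    (d : ℕ) (ρ₀ ρ₁ : EuclideanSpace ℝ (Fin d) → ℝ)
    (h₀meas : Measurable ρ₀) (h₁meas : Measurable ρ₁)
    (h₀range : ∀ x, ρ₀ x ∈ Icc (0:ℝ) 1) (h₁range : ∀ x, ρ₁ x ∈ Icc (0:ℝ) 1)
    (h₀supp : HasCompactSupport ρ₀) (h₁supp : HasCompactSupport ρ₁)
    (hint : ∫ x, ρ₀ x = ∫ x, ρ₁ x) (hposint : 0 < ∫ x, ρ₀ x)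
    (ψ : EuclideanSpace ℝ (Fin d) → ℝ) (hψconv : ConvexOn ℝ Set.univ ψ)
    (T : EuclideanSpace ℝ (Fin d) → EuclideanSpace ℝ (Fin d)) (hT : Measurable T)
    (hgrad : ∀ᵐ x, HasGradientAt ψ (T x) x)
    (hpush : (volume.withDensity fun x => ENNReal.ofReal (ρ₀ x)).map T =
      volume.withDensity fun x => ENNReal.ofReal (ρ₁ x)) :
    ∃ (ρ : EuclideanSpace ℝ (Fin d) → ℝ → ℝ)
      (v : EuclideanSpace ℝ (Fin d) → ℝ → EuclideanSpace ℝ (Fin d)),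
      Measurable (fun q : EuclideanSpace ℝ (Fin d) × ℝ => ρ q.1 q.2) ∧
      Measurable (fun q : EuclideanSpace ℝ (Fin d) × ℝ => v q.1 q.2) ∧
      (∀ x t, ρ x t ∈ Icc (0:ℝ) 1) ∧
      -- ρ(·,t) dx is the displacement interpolant μ_t for every t ∈ [0,1]
      (∀ t ∈ Icc (0:ℝ) 1,
        volume.withDensity (fun x => ENNReal.ofReal (ρ x t)) =
          (volume.withDensity fun x => ENNReal.ofReal (ρ₀ x)).map
            (fun x => (1 - t) • x + t • T x)) ∧
      -- the action equals the squared Wasserstein distance and is finite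
      ((∫⁻ q, ENNReal.ofReal (ρ q.1 q.2 * ‖v q.1 q.2‖ ^ 2)
          ∂((volume : Measure (EuclideanSpace ℝ (Fin d))).prod
              (volume.restrict (Icc (0:ℝ) 1)))) =
        W2sq (volume.withDensity fun x => ENNReal.ofReal (ρ₀ x))
          (volume.withDensity fun x => ENNReal.ofReal (ρ₁ x)) ∧
        W2sq (volume.withDensity fun x => ENNReal.ofReal (ρ₀ x))
          (volume.withDensity fun x => ENNReal.ofReal (ρ₁ x)) < ⊤) ∧
      -- weak continuity equation on ℝ^d × (0,1)
      (∀ q : EuclideanSpace ℝ (Fin d) → ℝ → ℝ,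
        ContDiff ℝ (⊤ : ℕ∞) (fun z : EuclideanSpace ℝ (Fin d) × ℝ => q z.1 z.2) →
        HasCompactSupport (fun z : EuclideanSpace ℝ (Fin d) × ℝ => q z.1 z.2) →
        tsupport (fun z : EuclideanSpace ℝ (Fin d) × ℝ => q z.1 z.2) ⊆
          Set.univ ×ˢ Ioo (0:ℝ) 1 →
        (∫ t in Icc (0:ℝ) 1, ∫ x, ρ x t *
            (deriv (fun s => q x s) t + ⟪v x t, gradient (fun y => q y t) x⟫)) = 0) ∧
      -- weak momentum equation on ℝ^d × (0,1)
      (∀ w : EuclideanSpace ℝ (Fin d) → ℝ → EuclideanSpace ℝ (Fin d),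
        ContDiff ℝ (⊤ : ℕ∞) (fun z : EuclideanSpace ℝ (Fin d) × ℝ => w z.1 z.2) →
        HasCompactSupport (fun z : EuclideanSpace ℝ (Fin d) × ℝ => w z.1 z.2) →
        tsupport (fun z : EuclideanSpace ℝ (Fin d) × ℝ => w z.1 z.2) ⊆
          Set.univ ×ˢ Ioo (0:ℝ) 1 →
        (∫ t in Icc (0:ℝ) 1, ∫ x, ρ x t *
            ⟪v x t, deriv (fun s => w x s) t +
              fderiv ℝ (fun y => w y t) x (v x t)⟫) = 0) := by
  set μ₀ : Measure (EuclideanSpace ℝ (Fin d)) :=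
    volume.withDensity fun x => ENNReal.ofReal (ρ₀ x) with hμ₀
  set μ₁ : Measure (EuclideanSpace ℝ (Fin d)) :=
    volume.withDensity fun x => ENNReal.ofReal (ρ₁ x) with hμ₁
  have hint0 : Integrable ρ₀ volume := by
    by_contra hn
    rw [integral_undef hn] at hposint
    exact lt_irrefl _ hposint
  have hfin : IsFiniteMeasure μ₀ := isFiniteMeasure_withDensity_ofReal hint0.2
  have hle0 : μ₀ ≤ volume := by
    calc μ₀ ≤ volume.withDensity 1 := withDensity_mono (Filter.Eventually.of_forall fun x => by
            simpa using ENNReal.ofReal_le_ofReal (h₀range x).2)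
      _ = volume := withDensity_one
  have hle1 : μ₁ ≤ volume := by
    calc μ₁ ≤ volume.withDensity 1 := withDensity_mono (Filter.Eventually.of_forall fun x => by
            simpa using ENNReal.ofReal_le_ofReal (h₁range x).2)
      _ = volume := withDensity_one
  obtain ⟨R, hR0, hR1⟩ : ∃ R, tsupport ρ₀ ⊆ Metric.closedBall 0 R ∧
      tsupport ρ₁ ⊆ Metric.closedBall 0 R := by
    obtain ⟨R, hR⟩ := (h₀supp.isCompact.isBounded.union h₁supp.isCompact.isBounded).subset_closedBall 0
    exact ⟨R, subset_union_left.trans hR, subset_union_right.trans hR⟩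
  have hb0 : ∀ᵐ x ∂μ₀, x ∈ Metric.closedBall (0 : EuclideanSpace ℝ (Fin d)) R := by
    rw [hμ₀, ae_withDensity_iff h₀meas.ennreal_ofReal]
    refine Filter.Eventually.of_forall fun x hx => hR0 (subset_tsupport _ ?_)
    intro h; exact hx (by simp [h])
  have hb1' : ∀ᵐ x ∂μ₁, x ∈ Metric.closedBall (0 : EuclideanSpace ℝ (Fin d)) R := by
    rw [hμ₁, ae_withDensity_iff h₁meas.ennreal_ofReal]
    refine Filter.Eventually.of_forall fun x hx => hR1 (subset_tsupport _ ?_)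
    intro h; exact hx (by simp [h])
  have hb1 : ∀ᵐ x ∂μ₀, T x ∈ Metric.closedBall (0 : EuclideanSpace ℝ (Fin d)) R := by
    rw [← hpush] at hb1'
    exact ae_of_ae_map hT.aemeasurable hb1'
  have hψc : Continuous ψ := by
    simpa [continuousOn_univ] using hψconv.continuousOn isOpen_univ
  have hsub : ∀ᵐ x ∂μ₀, ∀ y, ψ x + ⟪T x, y - x⟫ ≤ ψ y := by
    have h1 : ∀ᵐ x ∂μ₀, HasGradientAt ψ (T x) x :=
      (withDensity_absolutelyContinuous _ _).ae_le hgrad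
    filter_upwards [h1] with x hx y using subgradient_of_hasGradientAt hψconv hx y
  obtain ⟨J, hJ⟩ : ∃ J : EuclideanSpace ℝ (Fin d) → EuclideanSpace ℝ (Fin d),
      ∀ z y, ψ (J z) + ⟪z - J z, y - J z⟫ ≤ ψ y := by
    obtain ⟨x₀, hx₀⟩ := hgrad.exists
    exact exists_resolvent hψconv (subgradient_of_hasGradientAt hψconv hx₀)
  have hJc : Continuous J := (resolvent_lipschitz hJ).continuous
  have hJS : ∀ᵐ x ∂μ₀, J (x + T x) = x := by
    filter_upwards [hsub] with x hx using resolvent_eq hJ hx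
  have hTt : ∀ t : ℝ, Measurable (fun x => (1 - t) • x + t • T x) := fun t => by fun_prop
  have hTj : Measurable (fun p : ℝ × EuclideanSpace ℝ (Fin d) =>
      (1 - p.1) • p.2 + p.1 • T p.2) := by fun_prop
  -- domination by Lebesgue measure
  have hdom : ∀ t ∈ Icc (0:ℝ) 1, μ₀.map (fun x => (1 - t) • x + t • T x) ≤ volume := by
    intro t ht
    have hSm : Measurable (fun x => x + T x) := by fun_prop
    rcases eq_or_lt_of_le ht.1 with h | h
    · subst h
      have : (fun x : EuclideanSpace ℝ (Fin d) => (1 - (0:ℝ)) • x + (0:ℝ) • T x) = id := by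
        funext x; simp
      rw [this, Measure.map_id]
      exact hle0
    rcases eq_or_lt_of_le ht.2 with h' | h'
    · subst h'
      have : (fun x : EuclideanSpace ℝ (Fin d) => (1 - (1:ℝ)) • x + (1:ℝ) • T x) = T := by
        funext x; simp
      rw [this, hpush]
      exact hle1
    have hσ0 : (μ₀.map (fun x => x + T x)).map J ≤ volume := by
      rw [Measure.map_map hJc.measurable hSm]
      have : μ₀.map (J ∘ fun x => x + T x) = μ₀.map id := Measure.map_congr hJS
      rw [this, Measure.map_id]
      exact hle0
    have hσ1 : (μ₀.map (fun x => x + T x)).map (fun z => z - J z) ≤ volume := by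
      have hKm : Measurable (fun z => z - J z) := (continuous_id.sub hJc).measurable
      rw [Measure.map_map hKm hSm]
      have : μ₀.map ((fun z => z - J z) ∘ fun x => x + T x) = μ₀.map T := by
        refine Measure.map_congr ?_
        filter_upwards [hJS] with x hx
        simp only [Function.comp, hx]
        abel
      rw [this, hpush]
      exact hle1
    have hmain := map_interp_le hJ hσ0 hσ1 ⟨h, h'⟩
    have hMc : Continuous (fun z => (1 - t) • J z + t • (z - J z)) := by fun_prop
    rw [Measure.map_map hMc.measurable hSm] at hmain
    have : μ₀.map ((fun z => (1 - t) • J z + t • (z - J z)) ∘ fun x => x + T x)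
        = μ₀.map (fun x => (1 - t) • x + t • T x) := by
      refine Measure.map_congr ?_
      filter_upwards [hJS] with x hx
      simp only [Function.comp, hx, add_sub_cancel_left]
    rwa [this] at hmain
  have hdomR : ∀ t ∈ Icc (0:ℝ) 1, μ₀.map (fun x => (1 - t) • x + t • T x) ≤
      (volume : Measure (EuclideanSpace ℝ (Fin d))).restrict (Metric.closedBall 0 R) := by
    intro t ht
    have hmem : ∀ᵐ y ∂(μ₀.map (fun x => (1 - t) • x + t • T x)),
        y ∈ Metric.closedBall (0 : EuclideanSpace ℝ (Fin d)) R := by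
      refine (ae_map_iff (hTt t).aemeasurable Metric.isClosed_closedBall.measurableSet).2 ?_
      filter_upwards [hb0, hb1] with x hx hTx
      exact (convex_closedBall (0 : EuclideanSpace ℝ (Fin d)) R) hx hTx (sub_nonneg.2 ht.2) ht.1
        (by ring)
    rw [← Measure.restrict_eq_self_of_ae_mem hmem]
    exact Measure.restrict_mono le_rfl (hdom t ht)
  let κ : ProbabilityTheory.Kernel ℝ (EuclideanSpace ℝ (Fin d)) :=
    { toFun := fun t => μ₀.map (fun x => (1 - t) • x + t • T x)
      measurable' := by
        refine Measure.measurable_of_measurable_coe _ fun s hs => ?_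
        have h1 : ∀ t : ℝ, μ₀.map (fun x => (1 - t) • x + t • T x) s
            = μ₀ (Prod.mk t ⁻¹' ((fun p : ℝ × EuclideanSpace ℝ (Fin d) =>
              (1 - p.1) • p.2 + p.1 • T p.2) ⁻¹' s)) := fun t => by
          rw [Measure.map_apply (hTt t) hs]; rfl
        simp_rw [h1]
        exact measurable_measure_prodMk_left (hTj hs) }
  have hκ : ∀ t, κ t = μ₀.map (fun x => (1 - t) • x + t • T x) := fun t => rfl
  have hκfin : ProbabilityTheory.IsFiniteKernel κ := by
    refine ⟨μ₀ univ, measure_lt_top _ _, fun t => ?_⟩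
    rw [hκ, Measure.map_apply (hTt t) MeasurableSet.univ, preimage_univ]
  obtain ⟨ρ, hρm, hρr, hρ⟩ := exists_density κ R (Icc (0:ℝ) 1) (fun t ht => hdomR t ht)
  -- the velocity field
  obtain ⟨vv, hvm, hv⟩ : ∃ vv : EuclideanSpace ℝ (Fin d) × ℝ → EuclideanSpace ℝ (Fin d),
      Measurable vv ∧ ∀ᵐ x ∂μ₀, ∀ t ∈ Ioo (0:ℝ) 1,
        vv ((1 - t) • x + t • T x, t) = T x - x := by
    let Θ : EuclideanSpace ℝ (Fin d) × Ioo (0:ℝ) 1 → EuclideanSpace ℝ (Fin d) × ℝ :=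
      fun p => ((1 - (p.2 : ℝ)) • J p.1 + (p.2 : ℝ) • (p.1 - J p.1), (p.2 : ℝ))
    have hΘc : Continuous Θ := by fun_prop
    have hΘi : Function.Injective Θ := by
      rintro ⟨z, t⟩ ⟨w, s⟩ h
      simp only [Θ, Prod.mk.injEq] at h
      have hts : t = s := Subtype.ext h.2
      subst hts
      have := interp_injective hJ t.2 h.1
      rw [this]
    have : PolishSpace (Ioo (0:ℝ) 1) := isOpen_Ioo.polishSpace
    have hΘe : MeasurableEmbedding Θ := hΘc.measurableEmbedding hΘi
    obtain ⟨vv, hvm, hvv⟩ := hΘe.exists_measurable_extend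
      (g := fun p => (p.1 - J p.1) - J p.1)
      ((continuous_fst.sub (hJc.comp continuous_fst)).sub (hJc.comp continuous_fst)).measurable
      (fun _ => ⟨0⟩)
    refine ⟨vv, hvm, ?_⟩
    filter_upwards [hJS] with x hx t ht
    have h2 := congrFun hvv (x + T x, ⟨t, ht⟩)
    simp only [Function.comp, Θ, hx, add_sub_cancel_left] at h2
    exact h2
  refine ⟨ρ, fun x t => vv (x, t), hρm, hvm, hρr, fun t ht => hρ t ht, ?_, ?_, ?_⟩
  · -- the action
    have hcost : ∫⁻ x, ENNReal.ofReal (‖x - T x‖ ^ 2) ∂μ₀ = W2sq μ₀ μ₁ := by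
      refine le_antisymm (le_sInf ?_) (sInf_le ?_)
      · rintro C ⟨π, hπ0, hπ1, rfl⟩
        exact cost_le hψc hT hb0 hb1 hsub π hπ0 (hπ1.trans hpush.symm)
      · have hg : Measurable (fun x => (x, T x)) := measurable_id.prodMk hT
        refine ⟨μ₀.map (fun x => (x, T x)), ?_, ?_, ?_⟩
        · rw [Measure.map_map measurable_fst hg]
          exact Measure.map_id
        · rw [Measure.map_map measurable_snd hg]
          exact hpush
        · rw [lintegral_map (by fun_prop) hg]
    refine ⟨?_, ?_⟩
    · rw [← hcost]
      have hm : Measurable (fun q : EuclideanSpace ℝ (Fin d) × ℝ =>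
          ENNReal.ofReal (ρ q.1 q.2 * ‖vv (q.1, q.2)‖ ^ 2)) :=
        (hρm.mul (hvm.norm.pow_const 2)).ennreal_ofReal
      rw [lintegral_prod_symm _ hm.aemeasurable, ← restrict_Ioo_eq_restrict_Icc]
      have hin : ∀ t ∈ Ioo (0:ℝ) 1,
          ∫⁻ x, ENNReal.ofReal (ρ x t * ‖vv (x, t)‖ ^ 2)
            = ∫⁻ x, ENNReal.ofReal (‖x - T x‖ ^ 2) ∂μ₀ := by
        intro t ht
        have hρt : Measurable (fun x => ρ x t) := hρm.comp measurable_prodMk_right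
        have hvt : Measurable (fun x => ENNReal.ofReal (‖vv (x, t)‖ ^ 2)) :=
          ((hvm.comp measurable_prodMk_right).norm.pow_const 2).ennreal_ofReal
        calc ∫⁻ x, ENNReal.ofReal (ρ x t * ‖vv (x, t)‖ ^ 2)
            = ∫⁻ x, ENNReal.ofReal (ρ x t) * ENNReal.ofReal (‖vv (x, t)‖ ^ 2) := by
              refine lintegral_congr fun x => ?_
              rw [ENNReal.ofReal_mul (hρr x t).1]
          _ = ∫⁻ x, ENNReal.ofReal (‖vv (x, t)‖ ^ 2)
                ∂(volume.withDensity (fun x => ENNReal.ofReal (ρ x t))) := by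
              rw [lintegral_withDensity_eq_lintegral_mul _ hρt.ennreal_ofReal hvt]
              rfl
          _ = ∫⁻ x, ENNReal.ofReal (‖x - T x‖ ^ 2) ∂μ₀ := by
              rw [hρ t (Ioo_subset_Icc_self ht), hκ, lintegral_map hvt (hTt t)]
              refine lintegral_congr_ae ?_
              filter_upwards [hv] with x hx
              rw [hx t ht, norm_sub_rev]
      rw [setLIntegral_congr_fun measurableSet_Ioo hin]
      simp
    · rw [← hcost]
      have hbd : ∀ᵐ x ∂μ₀, ENNReal.ofReal (‖x - T x‖ ^ 2) ≤ ENNReal.ofReal ((R + R) ^ 2) := by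
        filter_upwards [hb0, hb1] with x hx hTx
        simp only [mem_closedBall_zero_iff] at hx hTx
        refine ENNReal.ofReal_le_ofReal ?_
        gcongr
        exact (norm_sub_le _ _).trans (add_le_add hx hTx)
      refine (lintegral_mono_ae hbd).trans_lt ?_
      rw [lintegral_const]
      exact ENNReal.mul_lt_top ENNReal.ofReal_lt_top (measure_lt_top _ _)
  · -- continuity equation
    intro q hq hqc hqs
    set U : EuclideanSpace ℝ (Fin d) × ℝ → ℝ := fun z => q z.1 z.2 with hU
    have hU1 : ContDiff ℝ 1 U := hq.of_le (by exact_mod_cast le_top)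
    have hW := weak_integral (μ₀ := μ₀) (U := U) hT hb0 hb1 hq hqc hqs (c := fun _ => (1:ℝ))
      stronglyMeasurable_const (C := 1) (Filter.Eventually.of_forall fun x => by simp)
    refine Eq.trans ?_ hW
    rw [integral_Icc_eq_integral_Ioo, integral_Icc_eq_integral_Ioo]
    refine setIntegral_congr_fun measurableSet_Ioo fun t ht => ?_
    have hconv : ∀ x, deriv (fun s => q x s) t + ⟪vv (x, t), gradient (fun y => q y t) x⟫
        = fderiv ℝ U (x, t) (vv (x, t), 1) := by
      intro x
      rw [deriv_time_eq hU1 x t, real_inner_comm, inner_gradient_left, fderiv_space_eq hU1 x t,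
        ← map_add]
      simp
    simp only [hconv]
    have hvt : Measurable (fun x => vv (x, t)) := hvm.comp measurable_prodMk_right
    rw [integral_density_eq (r := fun x => ρ x t) (hρm.comp measurable_prodMk_right)
      (fun x => (hρr x t).1) (hTt t) (hρ t (Ioo_subset_Icc_self ht))
      (measurable_fderiv_apply hU1 t hvt)]
    refine integral_congr_ae ?_
    filter_upwards [hv] with x hx
    simp [hx t ht]
  · -- momentum equation
    intro w hw hwc hws
    set U : EuclideanSpace ℝ (Fin d) × ℝ → EuclideanSpace ℝ (Fin d) := fun z => w z.1 z.2 with hU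
    have hU1 : ContDiff ℝ 1 U := hw.of_le (by exact_mod_cast le_top)
    have hW := weak_integral (μ₀ := μ₀) (U := U) hT hb0 hb1 hw hwc hws (c := fun x => T x - x)
      (by fun_prop : Measurable fun x => T x - x).stronglyMeasurable (C := R + R) (by
        filter_upwards [hb0, hb1] with x hx hTx
        simp only [mem_closedBall_zero_iff] at hx hTx
        exact (norm_sub_le _ _).trans (add_le_add hTx hx))
    refine Eq.trans ?_ hW
    rw [integral_Icc_eq_integral_Ioo, integral_Icc_eq_integral_Ioo]
    refine setIntegral_congr_fun measurableSet_Ioo fun t ht => ?_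
    have hconv : ∀ x, deriv (fun s => w x s) t + fderiv ℝ (fun y => w y t) x (vv (x, t))
        = fderiv ℝ U (x, t) (vv (x, t), 1) := by
      intro x
      rw [deriv_time_eq hU1 x t, fderiv_space_eq hU1 x t, ← map_add]
      simp
    simp only [hconv]
    have hvt : Measurable (fun x => vv (x, t)) := hvm.comp measurable_prodMk_right
    rw [integral_density_eq (r := fun x => ρ x t) (hρm.comp measurable_prodMk_right)
      (fun x => (hρr x t).1) (hTt t) (hρ t (Ioo_subset_Icc_self ht))
      (hvt.inner
        (measurable_fderiv_apply hU1 t hvt))]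
    refine integral_congr_ae ?_
    filter_upwards [hv] with x hx
    simp only [hx t ht]
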